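/- Let k be a field and A and B be k-algebras such that A ⊗_k B is noetherian. If A and B are almost Cohen-Macaulay rings and moreover one of them is Cohen-Macaulay, then A ⊗_k B is an almost Cohen-Macaulay ring. -/

import Mathlib

noncomputable section

open TensorProduct

universe u v w





/-- The depth of the ideal `I` on the module `M`: the supremum of lengths of
`M`-regular sequences with entries in `I`. -/
noncomputable def idealDepth (A : Type u) [CommRing A] (I : Ideal A)
    (M : Type v) [AddCommGroup M] [Module A M] : ℕ∞ :=
  sSup {n : ℕ∞ | ∃ rs : List A, (rs.length : ℕ∞) = n ∧ (∀ r ∈ rs, r ∈ I) ∧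
    RingTheory.Sequence.IsRegular M rs}

/-- The depth of a module over a local ring. -/
noncomputable def localDepth (A : Type u) [CommRing A] [IsLocalRing A]
    (M : Type v) [AddCommGroup M] [Module A M] : ℕ∞ :=
  idealDepth A (IsLocalRing.maximalIdeal A) M

/-- The (Krull) dimension of a module, i.e. the Krull dimension of its support. -/
noncomputable def supportDim (A : Type u) [CommRing A]
    (M : Type v) [AddCommGroup M] [Module A M] : WithBot ℕ∞ :=
  Order.krullDim (Module.support A M)

/-- `depth (M_P)` : the depth of the localization of `M` at a prime `P`,
over the local ring `A_P`. -/
noncomputable def depthAt (A : Type u) [CommRing A]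
    (M : Type v) [AddCommGroup M] [Module A M] (P : PrimeSpectrum A) : ℕ∞ :=
  localDepth (Localization.AtPrime P.asIdeal) (LocalizedModule P.asIdeal.primeCompl M)

/-- `ht_M(P) = dim (M_P)` : the height of a prime `P` in the support of `M`,
i.e. the dimension of the localized module `M_P` over `A_P`. -/
noncomputable def heightAt (A : Type u) [CommRing A]
    (M : Type v) [AddCommGroup M] [Module A M] (P : PrimeSpectrum A) : WithBot ℕ∞ :=
  supportDim (Localization.AtPrime P.asIdeal) (LocalizedModule P.asIdeal.primeCompl M)

/-- Serre's condition `(S_n)` for a module: for every `P` in the support,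
`depth (M_P) ≥ min (n, ht_M(P))`. -/
def SerreCondS (A : Type u) [CommRing A] (n : ℕ)
    (M : Type v) [AddCommGroup M] [Module A M] : Prop :=
  ∀ P ∈ Module.support A M,
    min (n : WithBot ℕ∞) (heightAt A M P) ≤ (depthAt A M P : WithBot ℕ∞)

/-- The condition `(C_n)` for a module: for every `P` in the support,
`depth (M_P) ≥ min (n, ht_M(P)) - 1`, equivalently
`min (n, ht_M(P)) ≤ depth (M_P) + 1`. -/
def CondC (A : Type u) [CommRing A] (n : ℕ)
    (M : Type v) [AddCommGroup M] [Module A M] : Prop :=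
  ∀ P ∈ Module.support A M,
    min (n : WithBot ℕ∞) (heightAt A M P) ≤ (depthAt A M P : WithBot ℕ∞) + 1

/-- A module `M` is almost Cohen-Macaulay if `depth(P, M) = depth (M_P)` for every
`P` in the support of `M` (Kang's definition). -/
def IsAlmostCMModule (A : Type u) [CommRing A]
    (M : Type v) [AddCommGroup M] [Module A M] : Prop :=
  ∀ P ∈ Module.support A M, idealDepth A P.asIdeal M = depthAt A M P

/-- A module `M` is Cohen-Macaulay if `depth (M_P) = dim (M_P)` for every `P` in its
support. -/
def IsCMModule (A : Type u) [CommRing A]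
    (M : Type v) [AddCommGroup M] [Module A M] : Prop :=
  ∀ P ∈ Module.support A M, (depthAt A M P : WithBot ℕ∞) = heightAt A M P

/-- A ring is almost Cohen-Macaulay if it is an almost Cohen-Macaulay module over
itself. -/
abbrev IsAlmostCMRing (A : Type u) [CommRing A] : Prop := IsAlmostCMModule A A

/-- A ring is Cohen-Macaulay if it is a Cohen-Macaulay module over itself, i.e. all its
localizations at primes have depth equal to dimension. -/
abbrev IsCMRing (A : Type u) [CommRing A] : Prop := IsCMModule A A

/-- A ring satisfies `(C_n)` if it does so as a module over itself. -/
abbrev RingCondC (A : Type u) [CommRing A] (n : ℕ) : Prop := CondC A n A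

/-- A ring satisfies `(S_n)` if it does so as a module over itself. -/
abbrev RingSerreCondS (A : Type u) [CommRing A] (n : ℕ) : Prop := SerreCondS A n A

/-!
The invariant to follow is the Cohen-Macaulay defect `dim - depth` of the localizations at primes.
A noetherian ring `A` is almost Cohen-Macaulay exactly when all these defects are at most `1`. In
one direction, if a regular sequence `xs` is maximal in a prime `P` of an almost Cohen-Macaulay
ring, then it is maximal in every localization at a prime `Q` with `(xs) ≤ Q ≤ P`. Each such `Q`
is thus an associated prime of `A ⧸ (xs)`, so there are finitely many, and prime avoidance with
Krull's height theorem gives `ht P ≤ length xs + 1`. Conversely, if the depth grew upon localizing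
at `P`, then some associated prime `Q > P` of `A ⧸ (xs)` would have `ht Q > depth A_Q + 1`.

The defect is subadditive along flat local homomorphisms: base defect plus closed fibre defect.
The fibres of `A → A ⊗[k] B` are `κ(p) ⊗[k] B`, and these are flat over `B` with fibres `κ(p) ⊗[k]
κ(q)`. A noetherian tensor product of two fields `K ⊗[k] L` has defect `0`: its primes come from
`E ⊗[k] L` with `E` finitely generated over `k`, and adjoining one generator at a time the fibres
are artinian or localizations of a polynomial ring in one variable over a field. Hence the defect
of `A ⊗[k] B` is at most the sum of the defects of `A` and `B`.
-/

open IsLocalRing RingTheory.Sequence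

section LocalHom

theorem isWeaklyRegular_of_exact {R M₁ M₂ M₃ : Type*} [CommRing R] [AddCommGroup M₁]
    [AddCommGroup M₂] [AddCommGroup M₃] [Module R M₁] [Module R M₂] [Module R M₃]
    {f : M₁ →ₗ[R] M₂} {g : M₂ →ₗ[R] M₃} (hf : Function.Injective f) (hfg : Function.Exact f g)
    (hg : Function.Surjective g) {rs : List R} (h₁ : IsWeaklyRegular M₁ rs)
    (h₃ : IsWeaklyRegular M₃ rs) : IsWeaklyRegular M₂ rs := by
  induction rs generalizing M₁ M₂ M₃ with
  | nil => exact .nil R M₂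
  | cons r rs ih =>
    rw [isWeaklyRegular_cons_iff] at h₁ h₃ ⊢
    have hzero : Function.Exact (0 : M₁ →ₗ[R] M₁) f := by
      rw [LinearMap.exact_iff, LinearMap.ker_eq_bot.mpr hf, LinearMap.range_zero]
    have hinj : Function.Injective (QuotSMulTop.map r f) := by
      have := QuotSMulTop.map_first_exact_on_four_term_exact_of_isSMulRegular_last hzero hfg h₃.1
      rwa [map_zero, LinearMap.exact_iff, LinearMap.range_zero, LinearMap.ker_eq_bot] at this
    exact ⟨isSMulRegular_of_range_eq_ker hf hfg.linearMap_ker_eq.symm h₁.1 h₃.1,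
      ih hinj (QuotSMulTop.map_exact r hfg hg) (QuotSMulTop.map_surjective r hg) h₁.2 h₃.2⟩

theorem isWeaklyRegular_of_forall_tensor_quotient_pow {S N : Type*} [CommRing S]
    [IsNoetherianRing S] [AddCommGroup N] [Module S N] [Module.Finite S N] {I : Ideal S}
    (hI : I ≤ (⊥ : Ideal S).jacobson) {rs : List S}
    (h : ∀ k : ℕ, IsWeaklyRegular (N ⊗[S] (S ⧸ I ^ k)) rs) : IsWeaklyRegular N rs := by
  induction rs generalizing N with
  | nil => exact .nil S N
  | cons r rs ih =>
    simp only [isWeaklyRegular_cons_iff] at h ⊢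
    refine ⟨?_, ih fun k ↦ ?_⟩
    · rw [isSMulRegular_iff_right_eq_zero_of_smul]
      intro n hn
      rw [← Submodule.mem_bot S, ← Ideal.iInf_pow_smul_eq_bot_of_le_jacobson I hI,
        Submodule.mem_iInf]
      intro k
      have hk := ((tensorQuotEquivQuotSMul N (I ^ k)).isSMulRegular_congr r).mp (h k).1
      rw [← Submodule.Quotient.mk_eq_zero]
      refine isSMulRegular_iff_right_eq_zero_of_smul.mp hk _ ?_
      rw [← Submodule.Quotient.mk_smul, hn, Submodule.Quotient.mk_zero]
    · exact ((QuotSMulTop.quotSMulTopTensorEquivQuotSMulTop r _ N).isWeaklyRegular_congr rs).mpr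
        (h k).2

theorem isArtinianRing_quotient_maximalIdeal_pow (R : Type*) [CommRing R] [IsLocalRing R]
    [IsNoetherianRing R] (k : ℕ) : IsArtinianRing (R ⧸ maximalIdeal R ^ k) := by
  rcases subsingleton_or_nontrivial (R ⧸ maximalIdeal R ^ k) with _ | h
  · infer_instance
  · exact quotient_artinian_of_mem_minimalPrimes_of_isLocalRing _
      ⟨⟨inferInstance, le_maximalIdeal (Ideal.Quotient.nontrivial_iff.mp h)⟩,
        fun _ hq _ ↦ have := hq.1; Ideal.IsPrime.le_of_pow_le hq.2⟩

theorem isFiniteLength_tensor_quotient_maximalIdeal_pow {R : Type*} [CommRing R] [IsLocalRing R]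
    [IsNoetherianRing R] (L : Type*) [AddCommGroup L] [Module R L] [Module.Finite R L] (k : ℕ) :
    IsFiniteLength R (L ⊗[R] (R ⧸ maximalIdeal R ^ k)) := by
  have := isArtinianRing_quotient_maximalIdeal_pow R k
  have : IsArtinian R ((R ⧸ maximalIdeal R ^ k) ⊗[R] L) :=
    isArtinian_of_surjective_algebraMap (R := R ⧸ maximalIdeal R ^ k) Ideal.Quotient.mk_surjective
  exact isFiniteLength_iff_isNoetherian_isArtinian.mpr
    ⟨inferInstance, (TensorProduct.comm R _ L).isArtinian_iff.mp this⟩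

section

variable {R S N : Type*} [CommRing R] [CommRing S] [Algebra R S] [AddCommGroup N] [Module R N]
  [Module S N] [IsScalarTower R S N]

variable (S N) in
/-- Reducing an `S`-module modulo the extension of an ideal `J` of `R` is the same as reducing it
modulo `J`. -/
def tensorQuotientMapEquiv (J : Ideal R) :
    N ⊗[S] (S ⧸ J.map (algebraMap R S)) ≃ₗ[S] N ⊗[R] (R ⧸ J) :=
  (TensorProduct.AlgebraTensorModule.congr (LinearEquiv.refl S N)
      (Algebra.TensorProduct.quotIdealMapEquivTensorQuot S J).toLinearEquiv).trans
    (TensorProduct.AlgebraTensorModule.cancelBaseChange R S S N (R ⧸ J))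

variable [IsLocalRing R] [Module.Flat R N] {ys : List S}

theorem isWeaklyRegular_tensor_of_isFiniteLength
    (hys : IsWeaklyRegular (N ⊗[R] (R ⧸ maximalIdeal R)) ys)
    {L : Type*} [AddCommGroup L] [Module R L] (hL : IsFiniteLength R L) :
    IsWeaklyRegular (N ⊗[R] L) ys := by
  induction hL with
  | of_subsingleton => exact ⟨fun _ _ ↦ Function.injective_of_subsingleton _⟩
  | @of_simple_quotient L _ _ P hsimple _ ih =>
    obtain ⟨m, hm, ⟨e⟩⟩ := isSimpleModule_iff_quot_maximal.mp hsimple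
    obtain rfl := eq_maximalIdeal hm
    exact isWeaklyRegular_of_exact
      (f := TensorProduct.AlgebraTensorModule.lTensor S N P.subtype)
      (g := TensorProduct.AlgebraTensorModule.lTensor S N P.mkQ)
      (Module.Flat.lTensor_preserves_injective_linearMap _ P.subtype_injective)
      (lTensor_exact N (LinearMap.exact_subtype_mkQ P) P.mkQ_surjective)
      (LinearMap.lTensor_surjective N P.mkQ_surjective) ih
      (((TensorProduct.AlgebraTensorModule.congr (LinearEquiv.refl S N)
        e).isWeaklyRegular_congr ys).mpr hys)

variable [IsLocalRing S] [IsNoetherianRing R] [IsNoetherianRing S] [IsLocalHom (algebraMap R S)]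
  [Module.Finite S N]

theorem isWeaklyRegular_tensor_of_isLocalHom
    (hys : IsWeaklyRegular (N ⊗[R] (R ⧸ maximalIdeal R)) ys)
    (L : Type*) [AddCommGroup L] [Module R L] [Module.Finite R L] :
    IsWeaklyRegular (N ⊗[R] L) ys := by
  have : Module.Finite S (N ⊗[R] L) :=
    .equiv (TensorProduct.AlgebraTensorModule.cancelBaseChange R S S N L)
  have hle : (maximalIdeal R).map (algebraMap R S) ≤ (⊥ : Ideal S).jacobson := by
    rw [jacobson_eq_maximalIdeal ⊥ bot_ne_top]
    exact ((local_hom_TFAE (algebraMap R S)).out 0 2).mp ‹_›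
  refine isWeaklyRegular_of_forall_tensor_quotient_pow hle fun k ↦ ?_
  rw [← Ideal.map_pow, ((tensorQuotientMapEquiv S (N ⊗[R] L) (maximalIdeal R ^ k)).trans
    (TensorProduct.AlgebraTensorModule.assoc R R S N L _)).isWeaklyRegular_congr]
  exact isWeaklyRegular_tensor_of_isFiniteLength hys
    (isFiniteLength_tensor_quotient_maximalIdeal_pow L k)

theorem isWeaklyRegular_map_append {xs : List R} (hxs : IsWeaklyRegular R xs)
    (hys : IsWeaklyRegular (N ⊗[R] (R ⧸ maximalIdeal R)) ys) :
    IsWeaklyRegular N (xs.map (algebraMap R S) ++ ys) := by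
  rw [isWeaklyRegular_append_iff]
  constructor
  · rw [isWeaklyRegular_map_algebraMap_iff, ← (TensorProduct.rid R N).isWeaklyRegular_congr]
    exact hxs.isWeaklyRegular_lTensor
  · rw [← Ideal.map_ofList, ← (tensorQuotEquivQuotSMul N _).isWeaklyRegular_congr,
      (tensorQuotientMapEquiv S N (Ideal.ofList xs)).isWeaklyRegular_congr]
    exact isWeaklyRegular_tensor_of_isLocalHom hys _

end

theorem ringKrullDim_le_add_of_isLocalHom (R S : Type*) [CommRing R] [CommRing S] [Algebra R S]
    [IsLocalRing R] [IsLocalRing S] [IsNoetherianRing R] [IsNoetherianRing S]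
    [IsLocalHom (algebraMap R S)] :
    ringKrullDim S ≤ ringKrullDim R + ringKrullDim (S ⧸ (maximalIdeal R).map (algebraMap R S)) := by
  have hle := ((local_hom_TFAE (algebraMap R S)).out 0 2).mp ‹_›
  have : (maximalIdeal S).LiesOver (maximalIdeal R) :=
    ⟨(maximalIdeal_comap (algebraMap R S)).symm⟩
  have hprime : ((maximalIdeal S).map
      (Ideal.Quotient.mk ((maximalIdeal R).map (algebraMap R S)))).IsPrime :=
    Ideal.map_isPrime_of_surjective Ideal.Quotient.mk_surjective (by rwa [Ideal.mk_ker])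
  rw [← maximalIdeal_height_eq_ringKrullDim, ← maximalIdeal_height_eq_ringKrullDim]
  calc ((maximalIdeal S).height : WithBot ℕ∞)
    _ ≤ ((maximalIdeal R).height + ((maximalIdeal S).map
          (Ideal.Quotient.mk ((maximalIdeal R).map (algebraMap R S)))).height : ℕ∞) :=
      WithBot.coe_le_coe.mpr (Ideal.height_le_height_add_of_liesOver _ _)
    _ ≤ (maximalIdeal R).height + ringKrullDim (S ⧸ (maximalIdeal R).map (algebraMap R S)) := by
      rw [WithBot.coe_add]
      gcongr
      exact Ideal.height_le_ringKrullDim_of_ne_top hprime.ne_top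

end LocalHom

section Defect

/-- The Cohen-Macaulay defect `dim R - depth R` of a local ring `R` is at most `d`. It is phrased
through a regular sequence of length at least `dim R - d`, which avoids subtraction and makes the
depth explicit. -/
def CMDefectLE (R : Type*) [CommRing R] (d : ℕ) : Prop :=
  ∃ rs : List R, IsRegular R rs ∧ ringKrullDim R ≤ (rs.length + d : ℕ)

/-- All localizations of `R` at primes have Cohen-Macaulay defect at most `d`: for noetherian `R`,
the case `d = 0` is the Cohen-Macaulay property and `d = 1` the almost Cohen-Macaulay property. -/
def LocallyCMDefectLE (R : Type*) [CommRing R] (d : ℕ) : Prop :=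
  ∀ (P : Ideal R) [P.IsPrime], CMDefectLE (Localization.AtPrime P) d

variable {R S : Type*} [CommRing R] [CommRing S]

theorem mem_maximalIdeal_of_isRegular [IsLocalRing R] {rs : List R} (h : IsRegular R rs) {r : R}
    (hr : r ∈ rs) : r ∈ maximalIdeal R := by
  have hne : Ideal.ofList rs ≠ ⊤ := by simpa using h.top_ne_smul.symm
  exact le_maximalIdeal hne (Ideal.subset_span hr)

theorem CMDefectLE.of_ringKrullDim_le [Nontrivial R] {d : ℕ} (h : ringKrullDim R ≤ d) :
    CMDefectLE R d :=
  ⟨[], .nil R R, by simpa using h⟩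

theorem CMDefectLE.of_ringEquiv (e : R ≃+* S) {d : ℕ} (h : CMDefectLE R d) : CMDefectLE S d := by
  obtain ⟨rs, h, hd⟩ := h
  refine ⟨rs.map e, (AddEquiv.isRegular_congr (e := e.toAddEquiv) ?_).mp h, ?_⟩
  · rw [List.forall₂_map_right_iff, List.forall₂_same]
    exact fun r _ x ↦ map_mul e r x
  · rwa [List.length_map, ← ringKrullDim_eq_of_ringEquiv e]

theorem CMDefectLE.of_flat_of_isLocalHom [Algebra R S] [IsLocalRing R] [IsLocalRing S]
    [IsNoetherianRing R] [IsNoetherianRing S] [IsLocalHom (algebraMap R S)] [Module.Flat R S]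
    {a b : ℕ} (hR : CMDefectLE R a)
    (hS : CMDefectLE (S ⧸ (maximalIdeal R).map (algebraMap R S)) b) : CMDefectLE S (a + b) := by
  obtain ⟨xs, hxs, hxd⟩ := hR
  obtain ⟨ys, hys, hyd⟩ := hS
  have : Nontrivial (S ⧸ (maximalIdeal R).map (algebraMap R S)) := hys.nontrivial
  have : IsLocalRing (S ⧸ (maximalIdeal R).map (algebraMap R S)) :=
    .of_surjective' _ Ideal.Quotient.mk_surjective
  obtain ⟨ys, rfl⟩ := List.map_surjective_iff.mpr
    (Ideal.Quotient.mk_surjective (I := (maximalIdeal R).map (algebraMap R S))) ys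
  have hys' : IsWeaklyRegular (S ⊗[R] (R ⧸ maximalIdeal R)) ys := by
    rw [← (Algebra.TensorProduct.quotIdealMapEquivTensorQuot S
      (maximalIdeal R)).toLinearEquiv.isWeaklyRegular_congr]
    exact (isWeaklyRegular_map_algebraMap_iff _ _ ys).mp hys.toIsWeaklyRegular
  refine ⟨xs.map (algebraMap R S) ++ ys, .of_isWeaklyRegular_of_mem_maximalIdeal S (fun r hr ↦ ?_)
    (isWeaklyRegular_map_append hxs.toIsWeaklyRegular hys'), ?_⟩
  · rcases List.mem_append.mp hr with hr | hr
    · obtain ⟨x, hx, rfl⟩ := List.mem_map.mp hr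
      exact map_nonunit (algebraMap R S) x (mem_maximalIdeal_of_isRegular hxs hx)
    · exact fun hu ↦ mem_maximalIdeal_of_isRegular hys (List.mem_map_of_mem hr) (hu.map _)
  · calc ringKrullDim S
      _ ≤ ringKrullDim R + ringKrullDim (S ⧸ (maximalIdeal R).map (algebraMap R S)) :=
        ringKrullDim_le_add_of_isLocalHom R S
      _ ≤ (xs.length + a : ℕ) + (ys.length + b : ℕ) := by
        rw [List.length_map] at hyd
        exact add_le_add hxd hyd
      _ = ((xs.map (algebraMap R S) ++ ys).length + (a + b) : ℕ) := by
        rw [List.length_append, List.length_map]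
        push_cast
        abel

theorem LocallyCMDefectLE.of_ringEquiv (e : R ≃+* S) {d : ℕ} (h : LocallyCMDefectLE R d) :
    LocallyCMDefectLE S d := fun P _ ↦
  (h (P.comap e)).of_ringEquiv (Localization.localRingEquiv (P.comap e) P e rfl)

theorem LocallyCMDefectLE.of_isLocalization [Algebra R S] (M : Submonoid R) [IsLocalization M S]
    {d : ℕ} (h : LocallyCMDefectLE R d) : LocallyCMDefectLE S d := by
  intro P _
  have := IsLocalization.isLocalization_isLocalization_atPrime_isLocalization M
    (Localization.AtPrime P) P
  exact (h (P.comap (algebraMap R S))).of_ringEquiv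
    (IsLocalization.algEquiv (P.comap (algebraMap R S)).primeCompl _ _).toRingEquiv

theorem LocallyCMDefectLE.of_flat [Algebra R S] [IsNoetherianRing R] [IsNoetherianRing S]
    [Module.Flat R S] {a b : ℕ} (hR : LocallyCMDefectLE R a)
    (hS : ∀ (p : Ideal R) [p.IsPrime], LocallyCMDefectLE (p.Fiber S) b) :
    LocallyCMDefectLE S (a + b) := by
  intro P _
  obtain ⟨p, _, hp⟩ : ∃ p : Ideal R, ∃ _ : p.IsPrime, P.LiesOver p :=
    ⟨P.under R, inferInstance, ⟨rfl⟩⟩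
  obtain ⟨q, _, rfl⟩ : ∃ (q : Ideal (p.Fiber S)) (_ : q.IsPrime),
      P = q.comap Algebra.TensorProduct.includeRight :=
    ⟨(PrimeSpectrum.primesOverOrderIsoFiber R S p ⟨P, ‹_›, hp⟩).asIdeal, inferInstance, by
      rw [← PrimeSpectrum.coe_primesOverOrderIsoFiber_symm_apply, OrderIso.symm_apply_apply]⟩
  let _ := Localization.AtPrime.algebraOfLiesOver p (q.comap Algebra.TensorProduct.includeRight)
  have : IsLocalHom (algebraMap (Localization.AtPrime p)
      (Localization.AtPrime (q.comap Algebra.TensorProduct.includeRight))) :=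
    Localization.isLocalHom_localRingHom ..
  refine (hR p).of_flat_of_isLocalHom ((hS p q).of_ringEquiv
    ((Ideal.Fiber.localizationAlgEquivQuotient p q).toRingEquiv.trans (Ideal.quotEquivOfEq ?_)))
  rw [← Localization.AtPrime.map_eq_maximalIdeal, Ideal.map_map, ← IsScalarTower.algebraMap_eq]

theorem CMDefectLE.localization_of_map_under_eq [Algebra R S] [IsNoetherianRing R]
    [IsNoetherianRing S] [Module.Flat R S] {d : ℕ} {P : Ideal S} [P.IsPrime]
    (hP : (P.under R).map (algebraMap R S) = P)
    (hR : CMDefectLE (Localization.AtPrime (P.under R)) d) :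
    CMDefectLE (Localization.AtPrime P) d := by
  let _ := Localization.AtPrime.algebraOfLiesOver (P.under R) P
  have : IsLocalHom (algebraMap (Localization.AtPrime (P.under R)) (Localization.AtPrime P)) :=
    Localization.isLocalHom_localRingHom ..
  refine hR.of_flat_of_isLocalHom (b := 0) ?_
  have hmax : (maximalIdeal (Localization.AtPrime (P.under R))).map (algebraMap _ _) =
      maximalIdeal (Localization.AtPrime P) := by
    rw [← Localization.AtPrime.map_eq_maximalIdeal, ← Localization.AtPrime.map_eq_maximalIdeal,
      Ideal.map_map, ← IsScalarTower.algebraMap_eq, IsScalarTower.algebraMap_eq R S,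
      ← Ideal.map_map, hP]
  rw [hmax]
  exact .of_ringKrullDim_le (ringKrullDim_eq_zero_of_field (ResidueField _)).le

theorem LocallyCMDefectLE.of_ringKrullDim_le {d : ℕ} (h : ringKrullDim R ≤ d) :
    LocallyCMDefectLE R d := fun P _ ↦ .of_ringKrullDim_le <| by
  rw [IsLocalization.AtPrime.ringKrullDim_eq_height P]
  exact (Ideal.height_le_ringKrullDim_of_ne_top ‹P.IsPrime›.ne_top).trans h

theorem LocallyCMDefectLE.of_isDomain_of_ringKrullDim_le_one [IsDomain R] (h : ringKrullDim R ≤ 1) :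
    LocallyCMDefectLE R 0 := by
  intro P _
  have hP := (Ideal.height_le_ringKrullDim_of_ne_top ‹P.IsPrime›.ne_top).trans h
  rw [← IsLocalization.AtPrime.ringKrullDim_eq_height P (Localization.AtPrime P)] at hP
  rcases eq_or_ne P ⊥ with rfl | hbot
  · refine .of_ringKrullDim_le ?_
    rw [IsLocalization.AtPrime.ringKrullDim_eq_height (⊥ : Ideal R)]
    simp
  obtain ⟨x, hxP, hx⟩ := Submodule.exists_mem_ne_zero_of_ne_bot hbot
  have : IsDomain (Localization.AtPrime P) :=
    IsLocalization.isDomain_localization P.primeCompl_le_nonZeroDivisors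
  have hx' : algebraMap R (Localization.AtPrime P) x ≠ 0 :=
    (map_ne_zero_iff _ (IsLocalization.injective _ P.primeCompl_le_nonZeroDivisors)).mpr hx
  refine ⟨[algebraMap R _ x], .of_isWeaklyRegular_of_mem_maximalIdeal _ ?_ ?_, by simpa using hP⟩
  · simpa using (IsLocalization.AtPrime.to_map_mem_maximal_iff _ P x).mpr hxP
  · exact (isWeaklyRegular_singleton_iff _ _).mpr (IsSMulRegular.of_ne_zero hx')

end Defect

section TensorProduct

/-- The fibre of `R ⊗[k] S` over a prime of `R` is the base change of `S` to the residue field. -/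
def fiberTensorProductEquiv (k : Type*) {R : Type*} (S : Type*) [CommRing k] [CommRing R]
    [CommRing S] [Algebra k R] [Algebra k S] (p : Ideal R) [p.IsPrime] :
    p.Fiber (R ⊗[k] S) ≃+* p.ResidueField ⊗[k] S :=
  (Algebra.TensorProduct.cancelBaseChange k R R p.ResidueField S).toRingEquiv

theorem LocallyCMDefectLE.tensorProduct_of_residueField {k R S : Type*} [CommRing k] [CommRing R]
    [CommRing S] [Algebra k R] [Algebra k S] [Module.Flat k S] [IsNoetherianRing R]
    [IsNoetherianRing (R ⊗[k] S)] {a b : ℕ} (hR : LocallyCMDefectLE R a)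
    (hS : ∀ (p : Ideal R) [p.IsPrime], LocallyCMDefectLE (p.ResidueField ⊗[k] S) b) :
    LocallyCMDefectLE (R ⊗[k] S) (a + b) :=
  hR.of_flat fun p _ ↦ (hS p).of_ringEquiv (fiberTensorProductEquiv k S p).symm

theorem isNoetherianRing_residueField_tensorProduct {k R S : Type*} [CommRing k] [CommRing R]
    [CommRing S] [Algebra k R] [Algebra k S] [IsNoetherianRing (R ⊗[k] S)] (p : Ideal R)
    [p.IsPrime] : IsNoetherianRing (p.ResidueField ⊗[k] S) := by
  have : IsNoetherianRing ((R ⊗[k] S) ⊗[R] p.ResidueField) :=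
    Algebra.EssFiniteType.isNoetherianRing (R ⊗[k] S) _
  exact isNoetherianRing_of_ringEquiv _ ((Algebra.TensorProduct.comm R _ _).toRingEquiv.trans
    (fiberTensorProductEquiv k S p))

theorem isNoetherianRing_tensorProduct_of_essFiniteType (k R S : Type*) [CommRing k] [CommRing R]
    [CommRing S] [Algebra k R] [Algebra k S] [IsNoetherianRing S] [Algebra.EssFiniteType k R] :
    IsNoetherianRing (R ⊗[k] S) :=
  have : IsNoetherianRing (S ⊗[k] R) := Algebra.EssFiniteType.isNoetherianRing S _
  isNoetherianRing_of_ringEquiv _ (Algebra.TensorProduct.comm k S R).toRingEquiv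

theorem LocallyCMDefectLE.tensorProduct_of_isLocalization {k R R' S : Type*} [CommRing k]
    [CommRing R] [CommRing R'] [CommRing S] [Algebra k R] [Algebra k R'] [Algebra k S]
    [Algebra R R'] [IsScalarTower k R R'] (M : Submonoid R) [IsLocalization M R'] {d : ℕ}
    (h : LocallyCMDefectLE (R ⊗[k] S) d) : LocallyCMDefectLE (R' ⊗[k] S) d := by
  let f : R ⊗[k] S →ₐ[R] R' ⊗[k] S := Algebra.TensorProduct.map (Algebra.ofId _ _) (AlgHom.id k S)
  let _ := f.toRingHom.toAlgebra
  have : IsScalarTower R (R ⊗[k] S) (R' ⊗[k] S) := .of_algebraMap_eq' f.comp_algebraMap.symm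
  have := IsLocalization.tensorProduct_tensorProduct k S M R' (by
    ext s
    change f (1 ⊗ₜ s) = _
    simp [f])
  exact .of_isLocalization (Algebra.algebraMapSubmonoid (R ⊗[k] S) M) h

open IntermediateField IntermediateField.algebraAdjoinAdjoin Polynomial in
theorem LocallyCMDefectLE.tensorProduct_adjoin_simple {E K : Type*} (L : Type*) [Field E] [Field K]
    [Field L] [Algebra E K] [Algebra E L] (x : K) : LocallyCMDefectLE (L ⊗[E] E⟮x⟯) 0 := by
  by_cases hx : IsIntegral E x
  · have := adjoin.finiteDimensional hx
    have : IsArtinianRing (L ⊗[E] E⟮x⟯) := isArtinian_of_tower L inferInstance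
    exact .of_ringKrullDim_le (Ring.krullDimLE_iff.mp inferInstance)
  have hx : Transcendental E x := fun h ↦ hx h.isIntegral
  have hpoly : LocallyCMDefectLE (Algebra.adjoin E {x} ⊗[E] L) 0 :=
    .of_ringEquiv (((polyEquivTensor' E L).toRingEquiv.trans
      (Algebra.TensorProduct.comm E _ _).toRingEquiv).trans
      (Algebra.TensorProduct.congr (algEquivOfTranscendental E x hx) AlgEquiv.refl).toRingEquiv)
      (.of_isDomain_of_ringKrullDim_le_one (R := L[X]) (Ring.krullDimLE_iff.mp inferInstance))
  exact (hpoly.tensorProduct_of_isLocalization (R' := E⟮x⟯)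
    (nonZeroDivisors (Algebra.adjoin E {x}))).of_ringEquiv
      (Algebra.TensorProduct.comm E _ _).toRingEquiv

theorem LocallyCMDefectLE.tensorProduct_extension {k E E' S : Type*} [CommRing k] [CommRing E]
    [CommRing E'] [CommRing S] [Algebra k E] [Algebra k E'] [Algebra E E'] [IsScalarTower k E E']
    [Algebra k S] [Module.Flat E E'] [IsNoetherianRing (E ⊗[k] S)] [IsNoetherianRing (E' ⊗[k] S)]
    {a b : ℕ} (h : LocallyCMDefectLE (E ⊗[k] S) a)
    (hE' : ∀ (p : Ideal (E ⊗[k] S)) [p.IsPrime], LocallyCMDefectLE (p.ResidueField ⊗[E] E') b) :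
    LocallyCMDefectLE (E' ⊗[k] S) (a + b) := by
  let e : (E ⊗[k] S) ⊗[E] E' ≃+* E' ⊗[k] S := (Algebra.TensorProduct.comm E _ _).toRingEquiv.trans
    (Algebra.TensorProduct.cancelBaseChange k E E E' S).toRingEquiv
  have : IsNoetherianRing ((E ⊗[k] S) ⊗[E] E') := isNoetherianRing_of_ringEquiv _ e.symm
  exact (h.tensorProduct_of_residueField hE').of_ringEquiv e

open IntermediateField in
theorem LocallyCMDefectLE.adjoin_simple_tensorProduct {k E K L : Type*} [Field k] [Field E]
    [Field K] [Field L] [Algebra k E] [Algebra k K] [Algebra E K] [IsScalarTower k E K]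
    [Algebra k L] [Algebra.EssFiniteType k E] (h : LocallyCMDefectLE (E ⊗[k] L) 0) (x : K) :
    LocallyCMDefectLE (E⟮x⟯ ⊗[k] L) 0 := by
  have : Algebra.EssFiniteType E E⟮x⟯ :=
    essFiniteType_iff.mpr (fg_adjoin_of_finite (Set.finite_singleton x))
  have : Algebra.EssFiniteType k E⟮x⟯ := .comp k E E⟮x⟯
  have := isNoetherianRing_tensorProduct_of_essFiniteType k E L
  have := isNoetherianRing_tensorProduct_of_essFiniteType k E⟮x⟯ L
  exact h.tensorProduct_extension fun p _ ↦ .tensorProduct_adjoin_simple p.ResidueField x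

open IntermediateField in
theorem LocallyCMDefectLE.adjoin_finset_tensorProduct {k K : Type*} (L : Type*) [Field k] [Field K]
    [Field L] [Algebra k K] [Algebra k L] (s : Finset K) :
    LocallyCMDefectLE (adjoin k (s : Set K) ⊗[k] L) 0 := by
  refine (induction_on_adjoin_finset s
    (fun E : IntermediateField k K ↦ E.FG ∧ LocallyCMDefectLE (E ⊗[k] L) 0) ⟨fg_bot, ?_⟩ ?_).2
  · have e : L ≃+* (⊥ : IntermediateField k K) ⊗[k] L :=
      ((Algebra.TensorProduct.lid k L).symm.trans
        (Algebra.TensorProduct.congr (botEquiv k K).symm AlgEquiv.refl)).toRingEquiv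
    exact .of_ringEquiv e (.of_ringKrullDim_le (ringKrullDim_eq_zero_of_field L).le)
  · rintro E x - ⟨hfg, hE⟩
    have : Algebra.EssFiniteType k E := essFiniteType_iff.mpr hfg
    refine ⟨?_, hE.adjoin_simple_tensorProduct x⟩
    rw [restrictScalars_adjoin_eq_sup]
    exact fg_sup hfg (fg_adjoin_of_finite (Set.finite_singleton x))

theorem map_comap_span_of_subset_range {R S : Type*} [CommRing R] [CommRing S] {f : R →+* S}
    {G : Set S} (hG : G ⊆ Set.range f) : ((Ideal.span G).comap f).map f = Ideal.span G := by
  refine le_antisymm Ideal.map_comap_le (Ideal.span_le.mpr fun g hg ↦ ?_)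
  obtain ⟨r, rfl⟩ := hG hg
  exact Ideal.mem_map_of_mem f (Ideal.subset_span hg)

open IntermediateField in
theorem exists_finset_subset_range_adjoin_tensorProduct {k K : Type*} (L : Type*) [Field k]
    [Field K] [CommRing L] [Algebra k K] [Algebra k L] {G : Set (K ⊗[k] L)} (hG : G.Finite) :
    ∃ s : Finset K, G ⊆
      Set.range (Algebra.TensorProduct.map (adjoin k (s : Set K)).val (AlgHom.id k L)) := by
  obtain ⟨V, hV, hGV⟩ := TensorProduct.exists_finite_submodule_left_of_setFinite G hG
  obtain ⟨s, rfl⟩ := Module.Finite.iff_fg.mp hV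
  refine ⟨s, fun g hg ↦ ?_⟩
  obtain ⟨v, rfl⟩ := hGV hg
  let i := Submodule.inclusion (Submodule.span_le.mpr (subset_adjoin k (s : Set K)) :
    Submodule.span k (s : Set K) ≤ (adjoin k (s : Set K)).toSubalgebra.toSubmodule)
  refine ⟨i.rTensor L v, ?_⟩
  change (adjoin k (s : Set K)).val.toLinearMap.rTensor L (i.rTensor L v) = _
  rw [← LinearMap.comp_apply, ← LinearMap.rTensor_comp]
  rfl

open IntermediateField in
theorem LocallyCMDefectLE.tensorProduct_field (k K L : Type*) [Field k] [Field K] [Field L]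
    [Algebra k K] [Algebra k L] [IsNoetherianRing (K ⊗[k] L)] :
    LocallyCMDefectLE (K ⊗[k] L) 0 := by
  intro P _
  obtain ⟨G, rfl⟩ := IsNoetherian.noetherian P
  obtain ⟨s, hs⟩ := exists_finset_subset_range_adjoin_tensorProduct L G.finite_toSet
  have : Algebra.EssFiniteType k (adjoin k (s : Set K)) :=
    essFiniteType_iff.mpr (fg_adjoin_finset s)
  have := isNoetherianRing_tensorProduct_of_essFiniteType k (adjoin k (s : Set K)) L
  let f := Algebra.TensorProduct.map (adjoin k (s : Set K)).val (AlgHom.id k L)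
  let _ := f.toRingHom.toAlgebra
  have : Module.Flat (adjoin k (s : Set K) ⊗[k] L) (K ⊗[k] L) :=
    RingHom.Flat.tensorProductMap (.of_isField (Field.toIsField _) _) (.id L)
  exact .localization_of_map_under_eq (map_comap_span_of_subset_range hs)
    (adjoin_finset_tensorProduct L s _)

theorem LocallyCMDefectLE.tensorProduct {k A B : Type*} [Field k] [CommRing A] [CommRing B]
    [Algebra k A] [Algebra k B] [IsNoetherianRing A] [IsNoetherianRing B]
    [IsNoetherianRing (A ⊗[k] B)] {a b : ℕ} (hA : LocallyCMDefectLE A a)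
    (hB : LocallyCMDefectLE B b) : LocallyCMDefectLE (A ⊗[k] B) (a + b) := by
  refine hA.tensorProduct_of_residueField fun p _ ↦ ?_
  have := isNoetherianRing_residueField_tensorProduct (k := k) (S := B) p
  have e := (Algebra.TensorProduct.comm k p.ResidueField B).toRingEquiv
  have : IsNoetherianRing (B ⊗[k] p.ResidueField) := isNoetherianRing_of_ringEquiv _ e
  refine .of_ringEquiv e.symm (hB.tensorProduct_of_residueField (b := 0) fun q _ ↦ ?_)
  have := isNoetherianRing_residueField_tensorProduct (k := k) (S := p.ResidueField) q
  exact .tensorProduct_field k _ _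

end TensorProduct

section Depth

theorem smul_top_quotSMulTop_ne_top {R M : Type*} [CommRing R] [AddCommGroup M] [Module R M]
    {I : Ideal R} {r : R} (hr : r ∈ I) (hI : I • (⊤ : Submodule R M) ≠ ⊤) :
    I • (⊤ : Submodule R (QuotSMulTop r M)) ≠ ⊤ := by
  intro heq
  have hcomap := congrArg (Submodule.comap (Submodule.mkQ _)) heq
  rw [Submodule.comap_smul_top_of_surjective I _ (Submodule.mkQ_surjective _), Submodule.ker_mkQ,
    Submodule.comap_top, ← Submodule.ideal_span_singleton_smul, sup_eq_left.mpr
      (Submodule.smul_mono_left ((Ideal.span_singleton_le_iff_mem I).mpr hr))] at hcomap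
  exact hI hcomap

section Rees

open CategoryTheory Abelian

variable {R : Type u} {M : Type v} [CommRing R] [IsNoetherianRing R] [Small.{v} R]
  [AddCommGroup M] [Module R M] [Module.Finite R M] {I : Ideal R}

theorem exists_isRegular_quotSMulTop (hI : I • (⊤ : Submodule R M) ≠ ⊤) {x : R} (hxI : x ∈ I)
    (hx : IsSMulRegular M x) {n : ℕ}
    (h : ∃ ys : List R, ys.length = n + 1 ∧ (∀ y ∈ ys, y ∈ I) ∧ IsRegular M ys) :
    ∃ zs : List R, zs.length = n ∧ (∀ z ∈ zs, z ∈ I) ∧ IsRegular (QuotSMulTop x M) zs := by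
  have : Module.Finite R (ModuleCat.of R M) := ‹_›
  have hx' : IsSMulRegular (ModuleCat.of R M) x := hx
  have hext := ((ModuleCat.exists_isRegular_tfae I (n + 1) (.of R M) hI.lt_top).out 1 3).mpr h
  refine ((ModuleCat.exists_isRegular_tfae I n (.of R (QuotSMulTop x M))
    (smul_top_quotSMulTop_ne_top hxI hI).lt_top).out 1 3).mp fun i hi ↦ ?_
  have zero₁ := AddCommGrpCat.isZero_of_iff_subsingleton.mpr (hext i (by omega))
  have zero₂ := AddCommGrpCat.isZero_of_iff_subsingleton.mpr (hext (i + 1) (by omega))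
  exact AddCommGrpCat.subsingleton_of_isZero <| ShortComplex.Exact.isZero_of_both_zeros
    (Ext.covariant_sequence_exact₃' _ hx'.smulShortComplex_shortExact i (i + 1) rfl)
    (zero₁.eq_zero_of_src _) (zero₂.eq_zero_of_tgt _)

theorem exists_isSMulRegular_of_length_lt (hI : I • (⊤ : Submodule R M) ≠ ⊤) {xs ys : List R}
    (hxsI : ∀ x ∈ xs, x ∈ I) (hxs : IsWeaklyRegular M xs) (hysI : ∀ y ∈ ys, y ∈ I)
    (hys : IsRegular M ys) (hlen : xs.length < ys.length) :
    ∃ z ∈ I, IsSMulRegular (M ⧸ Ideal.ofList xs • (⊤ : Submodule R M)) z := by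
  induction xs generalizing M ys with
  | nil =>
    obtain ⟨y, ys, rfl⟩ := List.exists_cons_of_length_pos hlen
    refine ⟨y, hysI y List.mem_cons_self, ?_⟩
    rw [(Submodule.quotEquivOfEqBot (Ideal.ofList [] • (⊤ : Submodule R M))
      (by simp)).isSMulRegular_congr]
    exact ((isRegular_cons_iff M y ys).mp hys).1
  | cons x xs ih =>
    rw [List.forall_mem_cons] at hxsI
    rw [isWeaklyRegular_cons_iff] at hxs
    obtain ⟨m, hm⟩ := Nat.exists_eq_add_one_of_ne_zero (Nat.ne_zero_of_lt hlen)
    obtain ⟨zs, rfl, hzsI, hzs⟩ := exists_isRegular_quotSMulTop hI hxsI.1 hxs.1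
      ⟨ys, hm, hysI, hys⟩
    obtain ⟨z, hz, hreg⟩ := ih (smul_top_quotSMulTop_ne_top hxsI.1 hI) hxsI.2 hxs.2 hzsI hzs
      (by simpa [hm] using hlen)
    refine ⟨z, hz, ?_⟩
    rwa [(Submodule.quotOfListConsSMulTopEquivQuotSMulTopInner M x xs).isSMulRegular_congr]

end Rees

theorem exists_mem_isSMulRegular_iff {R M : Type*} [CommRing R] [IsNoetherianRing R]
    [AddCommGroup M] [Module R M] [Module.Finite R M] {I : Ideal R} :
    (∃ z ∈ I, IsSMulRegular M z) ↔ ∀ Q ∈ associatedPrimes R M, ¬ I ≤ Q := by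
  have h := Ideal.subset_union_prime_finite (associatedPrimes.finite R M) (f := id) ⊥ ⊥
    (fun Q hQ _ _ ↦ hQ.isPrime) (I := I)
  simp only [id] at h
  rw [biUnion_associatedPrimes_eq_compl_regular, Set.subset_compl_iff_disjoint_right,
    Set.disjoint_left] at h
  simpa using not_congr h

variable {A : Type u} {M : Type v} [CommRing A] [AddCommGroup M] [Module A M]

theorem idealDepth_le_iff {I : Ideal A} {n : ℕ∞} :
    idealDepth A I M ≤ n ↔ ∀ rs : List A, (∀ r ∈ rs, r ∈ I) → IsRegular M rs → rs.length ≤ n := by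
  rw [idealDepth, sSup_le_iff]
  exact ⟨fun h rs hmem hreg ↦ h _ ⟨rs, rfl, hmem, hreg⟩,
    fun h _ ⟨rs, hlen, hmem, hreg⟩ ↦ hlen ▸ h rs hmem hreg⟩

theorem length_le_idealDepth {I : Ideal A} {rs : List A} (hmem : ∀ r ∈ rs, r ∈ I)
    (hreg : IsRegular M rs) : rs.length ≤ idealDepth A I M :=
  idealDepth_le_iff.mp le_rfl rs hmem hreg

theorem idealDepth_mono {I J : Ideal A} (hIJ : I ≤ J) : idealDepth A I M ≤ idealDepth A J M :=
  idealDepth_le_iff.mpr fun _ hmem ↦ length_le_idealDepth fun r hr ↦ hIJ (hmem r hr)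

theorem exists_isRegular_length_eq_idealDepth [Nontrivial M] {I : Ideal A}
    (h : idealDepth A I M < ⊤) :
    ∃ rs : List A, rs.length = idealDepth A I M ∧ (∀ r ∈ rs, r ∈ I) ∧ IsRegular M rs := by
  have : Nonempty {n : ℕ∞ | ∃ rs : List A, (rs.length : ℕ∞) = n ∧ (∀ r ∈ rs, r ∈ I) ∧
      IsRegular M rs} := ⟨0, [], rfl, by simp, .nil A M⟩
  exact ENat.sSup_mem_of_nonempty_of_lt_top h

theorem idealDepth_le_length_iff [IsNoetherianRing A] [Small.{v} A] [Module.Finite A M]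
    {I : Ideal A} (hI : I • (⊤ : Submodule A M) ≠ ⊤) {xs : List A} (hmem : ∀ x ∈ xs, x ∈ I)
    (hxs : IsWeaklyRegular M xs) :
    idealDepth A I M ≤ xs.length ↔
      ∃ Q ∈ associatedPrimes A (M ⧸ Ideal.ofList xs • (⊤ : Submodule A M)), I ≤ Q := by
  rw [← not_iff_not, not_exists]
  simp only [not_and]
  rw [← exists_mem_isSMulRegular_iff, idealDepth_le_iff]
  push Not
  constructor
  · rintro ⟨ys, hys, hreg, hlen⟩
    exact exists_isSMulRegular_of_length_lt hI hmem hxs hys hreg (by exact_mod_cast hlen)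
  · rintro ⟨z, hzI, hz⟩
    have hmem' : ∀ r ∈ xs ++ [z], r ∈ I := by
      simpa [or_imp, forall_and] using ⟨hmem, hzI⟩
    refine ⟨xs ++ [z], hmem', ⟨?_, fun htop ↦ hI (top_le_iff.mp ?_)⟩, ?_⟩
    · exact (isWeaklyRegular_append_iff M _ _).mpr ⟨hxs, (isWeaklyRegular_singleton_iff _ _).mpr hz⟩
    · exact htop.le.trans (Submodule.smul_mono_left (Ideal.span_le.mpr hmem'))
    · exact_mod_cast (by simp : xs.length < (xs ++ [z]).length)

open Module.associatedPrimes in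
theorem depthAt_le_length_iff [IsNoetherianRing A] [Module.Finite A M] {P : PrimeSpectrum A}
    (hP : P ∈ Module.support A M) {xs : List A} (hmem : ∀ x ∈ xs, x ∈ P.asIdeal)
    (hxs : IsWeaklyRegular M xs) :
    depthAt A M P ≤ xs.length ↔
      P.asIdeal ∈ associatedPrimes A (M ⧸ Ideal.ofList xs • (⊤ : Submodule A M)) := by
  let S := Localization.AtPrime P.asIdeal
  let f := LocalizedModule.mkLinearMap P.asIdeal.primeCompl M
  have : Nontrivial (LocalizedModule P.asIdeal.primeCompl M) := hP
  have hreg := hxs.isRegular_of_isLocalizedModule_of_mem S P.asIdeal f hmem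
  have hmap : (Ideal.ofList xs • (⊤ : Submodule A M)).localized' S P.asIdeal.primeCompl f =
      Ideal.ofList (xs.map (algebraMap A S)) • ⊤ := by
    rw [Submodule.localized'_smul, Ideal.localized'_eq_map, Submodule.localized'_top,
      Ideal.map_ofList]
  have hass := preimage_comap_associatedPrimes_eq_associatedPrimes_of_isLocalizedModule
    P.asIdeal.primeCompl S
    ((Ideal.ofList xs • (⊤ : Submodule A M)).toLocalizedQuotient' S P.asIdeal.primeCompl f)
  rw [hmap] at hass
  have hcomap : (maximalIdeal S).comap (algebraMap A S) = P.asIdeal :=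
    IsLocalization.AtPrime.under_maximalIdeal S P.asIdeal
  have hmax := Set.ext_iff.mp hass (maximalIdeal S)
  rw [Set.mem_preimage, hcomap] at hmax
  rw [depthAt, localDepth, ← List.length_map (algebraMap A S), idealDepth_le_length_iff, hmax]
  · constructor
    · rintro ⟨Q, hQ, hle⟩
      exact (maximalIdeal.isMaximal S).eq_of_le hQ.isPrime.ne_top hle ▸ hQ
    · exact fun h ↦ ⟨maximalIdeal S, h, le_rfl⟩
  · exact (Submodule.top_ne_ideal_smul_of_le_jacobson_annihilator
      (maximalIdeal_le_jacobson _)).symm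
  · exact List.forall_mem_map.mpr fun x hx ↦
      (IsLocalization.AtPrime.to_map_mem_maximal_iff S P.asIdeal x).mpr (hmem x hx)
  · exact hreg.toIsWeaklyRegular

theorem idealDepth_le_depthAt [Module.Finite A M] {P : PrimeSpectrum A}
    (hP : P ∈ Module.support A M) : idealDepth A P.asIdeal M ≤ depthAt A M P := by
  have : Nontrivial (LocalizedModule P.asIdeal.primeCompl M) := hP
  refine idealDepth_le_iff.mpr fun rs hmem hreg ↦ ?_
  rw [← List.length_map (algebraMap A (Localization.AtPrime P.asIdeal))]
  refine length_le_idealDepth ?_ (hreg.toIsWeaklyRegular.isRegular_of_isLocalizedModule_of_mem _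
    P.asIdeal (LocalizedModule.mkLinearMap P.asIdeal.primeCompl M) hmem)
  simpa only [List.forall_mem_map, IsLocalization.AtPrime.to_map_mem_maximal_iff _ P.asIdeal]
    using hmem

theorem height_le_length_add_one_of_finite {R : Type*} [CommRing R] [IsNoetherianRing R]
    {P : Ideal R} [P.IsPrime] {xs : List R} (hmem : ∀ x ∈ xs, x ∈ P)
    (hfin : {Q : Ideal R | Q.IsPrime ∧ Ideal.ofList xs ≤ Q ∧ Q < P}.Finite) :
    P.height ≤ xs.length + 1 := by
  classical
  obtain ⟨z, hzP, hz⟩ : ∃ z ∈ P,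
      ∀ Q : Ideal R, Q.IsPrime → Ideal.ofList xs ≤ Q → Q < P → z ∉ Q := by
    have havoid := (Ideal.subset_union_prime_finite hfin (f := id) ⊥ ⊥
      (fun Q hQ _ _ ↦ hQ.1) (I := P)).not.mpr fun ⟨Q, hQ, hle⟩ ↦ hQ.2.2.not_ge hle
    obtain ⟨z, hzP, hz⟩ := Set.not_subset.mp havoid
    exact ⟨z, hzP, fun Q hQ hxs hlt hzQ ↦ hz (Set.mem_biUnion (x := Q) ⟨hQ, hxs, hlt⟩ hzQ)⟩
  have hspan : Ideal.span (insert z xs.toFinset : Finset R) = Ideal.span {z} ⊔ Ideal.ofList xs := by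
    simp [Ideal.span_insert, Ideal.ofList]
  have hmin : P ∈ (Ideal.span (insert z xs.toFinset : Finset R)).minimalPrimes := by
    rw [hspan]
    refine ⟨⟨‹_›, sup_le ?_ (Ideal.span_le.mpr hmem)⟩, fun Q ⟨hQ, hle⟩ hQP ↦ ?_⟩
    · exact (Ideal.span_singleton_le_iff_mem P).mpr hzP
    · by_contra hPQ
      exact hz Q hQ (le_sup_right.trans hle) (lt_of_le_not_ge hQP hPQ)
        (hle (Ideal.mem_sup_left (Ideal.mem_span_singleton_self z)))
  have hcard : (insert z xs.toFinset).card ≤ xs.length + 1 :=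
    (Finset.card_insert_le _ _).trans (Nat.succ_le_succ xs.toFinset_card_le)
  exact (Ideal.height_le_card_of_mem_minimalPrimes_span_finset hmin).trans
    (by exact_mod_cast hcard)

theorem localDepth_le_ringKrullDim (R : Type u) [CommRing R] [IsLocalRing R] [IsNoetherianRing R] :
    localDepth R R ≤ ringKrullDim R := by
  rw [← maximalIdeal_height_eq_ringKrullDim, WithBot.coe_le_coe]
  refine idealDepth_le_iff.mpr fun rs _ hreg ↦ WithBot.coe_le_coe.mp ?_
  have : Nontrivial (R ⧸ Ideal.ofList rs) := by
    simpa [Ideal.Quotient.nontrivial_iff] using hreg.top_ne_smul.symm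
  rw [maximalIdeal_height_eq_ringKrullDim,
    ← ringKrullDim_add_length_eq_ringKrullDim_of_isRegular rs hreg]
  exact le_add_of_nonneg_left ringKrullDim_nonneg_of_nontrivial

theorem cmDefectLE_iff {R : Type u} [CommRing R] [IsLocalRing R] [IsNoetherianRing R] {d : ℕ} :
    CMDefectLE R d ↔ ringKrullDim R ≤ (localDepth R R + d : ℕ∞) := by
  constructor
  · rintro ⟨rs, hreg, hdim⟩
    have hlen : (rs.length : ℕ∞) ≤ localDepth R R :=
      length_le_idealDepth (fun _ ↦ mem_maximalIdeal_of_isRegular hreg) hreg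
    refine hdim.trans (WithBot.coe_le_coe.mpr ?_)
    push_cast
    gcongr
  · intro hdim
    obtain ⟨rs, hlen, -, hreg⟩ := exists_isRegular_length_eq_idealDepth (M := R)
      (I := maximalIdeal R)
      (WithBot.coe_lt_coe.mp ((localDepth_le_ringKrullDim R).trans_lt ringKrullDim_lt_top))
    exact ⟨rs, hreg, by rw [localDepth, ← hlen] at hdim; exact_mod_cast hdim⟩

/-- The localized module `A_P` of `A` over itself is the localized ring `A_P`; this translates
`depthAt A A P` and `heightAt A A P` into invariants of that ring. -/
def localizedModuleSelfEquiv (P : PrimeSpectrum A) :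
    LocalizedModule P.asIdeal.primeCompl A ≃ₗ[Localization.AtPrime P.asIdeal]
      Localization.AtPrime P.asIdeal :=
  (IsLocalizedModule.iso P.asIdeal.primeCompl
    (Algebra.linearMap A (Localization.AtPrime P.asIdeal))).extendScalarsOfIsLocalization
      P.asIdeal.primeCompl (Localization.AtPrime P.asIdeal)

theorem depthAt_self (P : PrimeSpectrum A) :
    depthAt A A P =
      localDepth (Localization.AtPrime P.asIdeal) (Localization.AtPrime P.asIdeal) := by
  simp only [depthAt, localDepth, idealDepth, (localizedModuleSelfEquiv P).isRegular_congr]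

theorem heightAt_self (P : PrimeSpectrum A) : heightAt A A P = P.asIdeal.height := by
  rw [heightAt, supportDim, (localizedModuleSelfEquiv P).support_eq, ← Module.supportDim,
    Module.supportDim_self_eq_ringKrullDim, IsLocalization.AtPrime.ringKrullDim_eq_height P.asIdeal]

theorem mem_support_self (P : PrimeSpectrum A) : P ∈ Module.support A A :=
  (localizedModuleSelfEquiv P).toEquiv.nontrivial

variable [IsNoetherianRing A]

theorem cmDefectLE_localization_iff (P : PrimeSpectrum A) {d : ℕ} :
    CMDefectLE (Localization.AtPrime P.asIdeal) d ↔ P.asIdeal.height ≤ depthAt A A P + d := by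
  rw [cmDefectLE_iff, depthAt_self, IsLocalization.AtPrime.ringKrullDim_eq_height P.asIdeal,
    WithBot.coe_le_coe]

theorem depthAt_le_height (P : PrimeSpectrum A) : depthAt A A P ≤ P.asIdeal.height := by
  rw [depthAt_self, ← WithBot.coe_le_coe,
    ← IsLocalization.AtPrime.ringKrullDim_eq_height P.asIdeal (Localization.AtPrime P.asIdeal)]
  exact localDepth_le_ringKrullDim _

theorem exists_isRegular_length_eq_idealDepth_asIdeal (P : PrimeSpectrum A) :
    ∃ rs : List A, rs.length = idealDepth A P.asIdeal A ∧ (∀ r ∈ rs, r ∈ P.asIdeal) ∧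
      IsRegular A rs :=
  have : Nontrivial A := PrimeSpectrum.nonempty_iff_nontrivial.mp ⟨P⟩
  exists_isRegular_length_eq_idealDepth <|
    ((idealDepth_le_depthAt (mem_support_self P)).trans (depthAt_le_height P)).trans_lt
      (Ideal.height_lt_top P.2.ne_top)

theorem IsCMRing.locallyCMDefectLE (h : IsCMRing A) : LocallyCMDefectLE A 0 := by
  intro P hP
  have hdepth := h ⟨P, hP⟩ (mem_support_self _)
  rw [heightAt_self, WithBot.coe_inj] at hdepth
  exact (cmDefectLE_localization_iff ⟨P, hP⟩).mpr (by simp [hdepth])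

theorem IsAlmostCMRing.locallyCMDefectLE (h : IsAlmostCMRing A) : LocallyCMDefectLE A 1 := by
  intro P hP
  obtain ⟨xs, hlen, hmem, hreg⟩ := exists_isRegular_length_eq_idealDepth_asIdeal ⟨P, hP⟩
  have hass : {Q : Ideal A | Q.IsPrime ∧ Ideal.ofList xs ≤ Q ∧ Q < P} ⊆
      associatedPrimes A (A ⧸ Ideal.ofList xs • (⊤ : Submodule A A)) := by
    rintro Q ⟨hQ, hxsQ, hQP⟩
    refine (depthAt_le_length_iff (P := ⟨Q, hQ⟩) (mem_support_self _)
      (fun x hx ↦ hxsQ (Ideal.subset_span hx)) hreg.toIsWeaklyRegular).mp ?_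
    rw [← h ⟨Q, hQ⟩ (mem_support_self _), hlen]
    exact idealDepth_mono hQP.le
  rw [cmDefectLE_localization_iff ⟨P, hP⟩, ← h ⟨P, hP⟩ (mem_support_self _), ← hlen]
  exact height_le_length_add_one_of_finite hmem ((associatedPrimes.finite A _).subset hass)

theorem LocallyCMDefectLE.isAlmostCMRing (h : LocallyCMDefectLE A 1) : IsAlmostCMRing A := by
  intro P _
  refine (idealDepth_le_depthAt (mem_support_self P)).antisymm ?_
  obtain ⟨xs, hlen, hmem, hreg⟩ := exists_isRegular_length_eq_idealDepth_asIdeal P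
  obtain ⟨Q, hQ, hPQ⟩ := (idealDepth_le_length_iff (by simpa using P.2.ne_top) hmem
    hreg.toIsWeaklyRegular).mp hlen.ge
  have hdepth : depthAt A A ⟨Q, hQ.isPrime⟩ ≤ xs.length :=
    (depthAt_le_length_iff (mem_support_self _) (fun x hx ↦ hPQ (hmem x hx))
      hreg.toIsWeaklyRegular).mpr hQ
  rw [← hlen]
  rcases hPQ.eq_or_lt with rfl | hlt
  · exact hdepth
  · have := hQ.isPrime
    have hheight : P.asIdeal.height + 1 ≤ xs.length + 1 :=
      calc P.asIdeal.height + 1 ≤ Q.height := Ideal.height_add_one_le_of_lt_of_isPrime hlt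
        _ ≤ depthAt A A ⟨Q, this⟩ + 1 := (cmDefectLE_localization_iff ⟨Q, this⟩).mp (h Q)
        _ ≤ xs.length + 1 := by gcongr
    exact (depthAt_le_height P).trans ((ENat.add_le_add_iff_right ENat.one_ne_top).mp hheight)

end Depth

theorem tensor_almostCM_of_almostCM_and_CM (k : Type u) [Field k]
    (A : Type v) (B : Type w) [CommRing A] [CommRing B] [Algebra k A] [Algebra k B]
    [IsNoetherianRing A] [IsNoetherianRing B] [IsNoetherianRing (A ⊗[k] B)]
    (hA : IsAlmostCMRing A) (hB : IsAlmostCMRing B)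
    (hCM : IsCMRing A ∨ IsCMRing B) : IsAlmostCMRing (A ⊗[k] B) := by
  rcases hCM with h | h
  · exact (h.locallyCMDefectLE.tensorProduct hB.locallyCMDefectLE).isAlmostCMRing
  · exact (hA.locallyCMDefectLE.tensorProduct h.locallyCMDefectLE).isAlmostCMRing

end
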